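/- Let X be a metric space that is δ-hyperbolic (four-point condition) for some δ ≥ 0, let x = {x_i} be a sequence in X tending to infinity with basepoint x₀, and let a ∈ X. Then for all sufficiently large n, |η_x(a) − (d(a,x_n) − d(x₀,x_n))| ≤ 4δ, where η_x(a) = limsup_{n→∞} (d(a,x_n) − d(x₀,x_n)). -/

import Mathlib

open Filter

/-!
Since `d(a, y) - d(o, y) = d(a, o) - 2 (a, y)_o`, the claim is about the Gromov products
`(a, x_n)_o`. These are at most `d(a, o)`, whereas `(x_m, x_n)_o` exceeds `d(a, o)` for large
`m` and `n`, so hyperbolicity in the form `(a, x_n)_o ≥ min ((a, x_m)_o, (x_m, x_n)_o) - δ` makes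
`(a, x_m)_o` and `(a, x_n)_o` differ by at most `δ`. The differences `d(a, x_m) - d(o, x_m)` thus
eventually all lie within `2δ` of any one of them, and so does their limit superior.
-/

section LimsupBounds

variable {ι : Type*} {l : Filter ι} [l.NeBot]

lemma limsup_mem_Icc_of_eventually {α : Type*} [ConditionallyCompleteLattice α] {u : ι → α}
    {b c : α} (h : ∀ᶠ i in l, u i ∈ Set.Icc b c) : limsup u l ∈ Set.Icc b c := by
  have below : ∀ᶠ i in l, b ≤ u i := h.mono fun _ hi => hi.1
  have above : ∀ᶠ i in l, u i ≤ c := h.mono fun _ hi => hi.2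
  constructor
  · refine le_limsup_of_le (isBoundedUnder_of_eventually_le above) fun d hd => ?_
    obtain ⟨i, hbi, hid⟩ := (below.and hd).exists
    exact hbi.trans hid
  · exact limsup_le_of_le (isBoundedUnder_of_eventually_ge below).isCoboundedUnder_le above

lemma abs_sub_limsup_le_of_eventually {u : ι → ℝ} {c r : ℝ} (h : ∀ᶠ i in l, |c - u i| ≤ r) :
    |c - limsup u l| ≤ r := by
  simp only [Set.mem_Icc_iff_abs_le] at h ⊢
  exact limsup_mem_Icc_of_eventually h

end LimsupBounds

section GromovProduct

variable {X : Type*} [PseudoMetricSpace X]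

/-- The Gromov product `(x, y)_o`; the basepoint `o` is the first argument. -/
noncomputable def gromovProduct (o x y : X) : ℝ :=
  (dist x o + dist y o - dist x y) / 2

lemma gromovProduct_comm (o x y : X) : gromovProduct o x y = gromovProduct o y x := by
  rw [gromovProduct, gromovProduct, dist_comm x y, add_comm (dist x o)]

lemma gromovProduct_le_dist_left (o x y : X) : gromovProduct o x y ≤ dist x o := by
  have := dist_triangle_left y o x
  rw [gromovProduct]
  linarith

lemma dist_sub_dist_eq_sub_two_mul_gromovProduct (o a y : X) :
    dist a y - dist o y = dist a o - 2 * gromovProduct o a y := by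
  rw [gromovProduct, dist_comm y o]
  ring

end GromovProduct

/-- `δ`-hyperbolicity of a space in the sense of Gromov, expressed by the four-point condition. -/
def IsGromovHyperbolic (X : Type*) [PseudoMetricSpace X] (δ : ℝ) : Prop :=
  ∀ p₁ p₂ p₃ p₄ : X,
    dist p₁ p₄ + dist p₂ p₃ ≤
      max (dist p₁ p₂ + dist p₃ p₄) (dist p₁ p₃ + dist p₂ p₄) + 2 * δ

namespace IsGromovHyperbolic

variable {X : Type*} [PseudoMetricSpace X] {δ : ℝ}

lemma min_gromovProduct_sub_le (hX : IsGromovHyperbolic X δ) (o x y z : X) :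
    min (gromovProduct o x y) (gromovProduct o y z) - δ ≤ gromovProduct o x z := by
  have four_point := hX x o y z
  rw [dist_comm o y, dist_comm o z] at four_point
  simp only [gromovProduct]
  grind

lemma gromovProduct_le_gromovProduct_add (hX : IsGromovHyperbolic X δ) {o a y z : X}
    (h : dist a o ≤ gromovProduct o y z) :
    gromovProduct o a y ≤ gromovProduct o a z + δ := by
  have hmin := hX.min_gromovProduct_sub_le o a y z
  rw [min_eq_left ((gromovProduct_le_dist_left o a y).trans h)] at hmin
  exact sub_le_iff_le_add.mp hmin

lemma abs_gromovProduct_sub_le (hX : IsGromovHyperbolic X δ) {o a y z : X}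
    (h : dist a o ≤ gromovProduct o y z) : |gromovProduct o a y - gromovProduct o a z| ≤ δ :=
  abs_sub_le_iff.mpr
    ⟨sub_le_iff_le_add'.mpr (hX.gromovProduct_le_gromovProduct_add h),
      sub_le_iff_le_add'.mpr (hX.gromovProduct_le_gromovProduct_add (gromovProduct_comm o y z ▸ h))⟩

lemma abs_dist_sub_dist_sub_le (hX : IsGromovHyperbolic X δ) {o a y z : X}
    (h : dist a o ≤ gromovProduct o y z) :
    |(dist a y - dist o y) - (dist a z - dist o z)| ≤ 2 * δ := by
  calc |(dist a y - dist o y) - (dist a z - dist o z)|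
      = 2 * |gromovProduct o a z - gromovProduct o a y| := by
        rw [dist_sub_dist_eq_sub_two_mul_gromovProduct,
          dist_sub_dist_eq_sub_two_mul_gromovProduct, sub_sub_sub_cancel_left, ← mul_sub,
          abs_mul, abs_two]
    _ ≤ 2 * δ := by
        rw [abs_sub_comm]
        gcongr
        exact hX.abs_gromovProduct_sub_le h

end IsGromovHyperbolic

/-- The quasi-horofunction `η_x` of a family `x` along a filter `l`, normalized to vanish at the
basepoint `o`. -/
noncomputable def quasiHorofunction {X ι : Type*} [PseudoMetricSpace X] (l : Filter ι)
    (x : ι → X) (o a : X) : ℝ :=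
  limsup (fun i => dist a (x i) - dist o (x i)) l

theorem quasi_horofunction_approximation_general {X ι : Type*} [PseudoMetricSpace X] {δ : ℝ}
    (hX : IsGromovHyperbolic X δ) {l : Filter ι} [l.NeBot] {x : ι → X} {o a : X}
    (hx : ∀ᶠ n in l, ∀ᶠ m in l, dist a o ≤ gromovProduct o (x n) (x m)) :
    ∀ᶠ n in l, |quasiHorofunction l x o a - (dist a (x n) - dist o (x n))| ≤ 2 * δ := by
  filter_upwards [hx] with n hn
  rw [abs_sub_comm]
  exact abs_sub_limsup_le_of_eventually (hn.mono fun _ hm => hX.abs_dist_sub_dist_sub_le hm)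

/-- Let `X` be δ-hyperbolic (four-point condition) and let `{x i}` tend to
infinity with basepoint `x 0`. Then for all sufficiently large `n`,
`|η_x(a) − (d(a, x n) − d(x 0, x n))| ≤ 4δ`, where
`η_x(a) = limsup (d(a, x n) − d(x 0, x n))`. -/
theorem quasi_horofunction_approximation
    (X : Type*) [MetricSpace X]
    (δ : ℝ) (hδ : 0 ≤ δ)
    (hhyp : ∀ p₁ p₂ p₃ p₄ : X,
      dist p₁ p₄ + dist p₂ p₃ ≤
        max (dist p₁ p₂ + dist p₃ p₄) (dist p₁ p₃ + dist p₂ p₄) + 2 * δ)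
    (x : ℕ → X)
    -- `{x i}` tends to infinity: the Gromov products `(x i, x j)_{x 0} → ∞`
    (hinf : Tendsto
      (fun p : ℕ × ℕ =>
        (dist (x p.1) (x 0) + dist (x p.2) (x 0) - dist (x p.1) (x p.2)) / 2)
      atTop atTop)
    (a : X) :
    ∀ᶠ n in atTop,
      |limsup (fun m => dist a (x m) - dist (x 0) (x m)) atTop -
        (dist a (x n) - dist (x 0) (x n))| ≤ 4 * δ := by
  rw [← prod_atTop_atTop_eq] at hinf
  exact (quasi_horofunction_approximation_general hhyp (hinf.eventually_ge_atTop _).curry).mono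
    fun _ hn => hn.trans (by linarith)
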